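/- Let α be an irrational real number and let (m_k) be given by the Master recursion. Then for every k ≥ 1 the nonlinear coefficients dominate the linear ones: m_k ≥ 1 / (D(1)·D(2)···D(k)). Consequently the radius of convergence of Σ_{k≥1} m_k x^k is at most the radius of convergence of Σ_{k≥1} x^k / (D(1)···D(k)). -/

import Mathlib

/-- `D α k = 2(1 - cos(2πkα))`, the small denominator of the Master recursion. -/
noncomputable def D (α : ℝ) (k : ℕ) : ℝ := 2 * (1 - Real.cos (2 * Real.pi * k * α))

/-! Writing `F` and `M` for the generating functions of `F_k` and `m_k`, the recursion for `F_k` is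
the coefficient form of `x · dF/dx = x · dM/dx · F`, that is, of `F = exp M`. When the divisors are
positive, all coefficients are nonnegative, so the linear term of the exponential gives
`m_k ≤ F_k`. Hence `m_{k+1} = F_k / D(k+1) ≥ m_k / D(k+1)`, and iterating this from
`m_1 = 1 / D(1)` yields the bound. -/

open Asymptotics Filter

theorem D_pos {α : ℝ} (hα : Irrational α) {k : ℕ} (hk : k ≠ 0) : 0 < D α k := by
  have hcos_ne : Real.cos (2 * Real.pi * k * α) ≠ 1 := by
    intro hcos
    obtain ⟨n, hn⟩ := (Real.cos_eq_one_iff _).1 hcos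
    have hint : k * α = n := mul_left_cancel₀ Real.two_pi_pos.ne' (by linarith)
    exact (hα.natCast_mul hk).ne_int n hint
  have hcos_lt : Real.cos (2 * Real.pi * k * α) < 1 := (Real.cos_le_one _).lt_of_ne hcos_ne
  exact mul_pos two_pos (sub_pos.2 hcos_lt)

/-- The Master recursion for an arbitrary sequence of positive divisors `d k` in place of the small
denominators `D α k`. Both `d` and `m` are indexed from `1`: the values `d 0` and `m 0` are
arbitrary. -/
structure IsMasterRecursion {K : Type*} [Field K] [LinearOrder K] (d m F : ℕ → K) : Prop where
  d_pos : ∀ k ≠ 0, 0 < d k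
  F_zero : F 0 = 1
  m_succ : ∀ k, m (k + 1) = F k / d (k + 1)
  natCast_mul_F : ∀ k : ℕ, 1 ≤ k → k * F k = ∑ j ∈ Finset.Icc 1 k, j * m j * F (k - j)

namespace IsMasterRecursion

variable {K : Type*} [Field K] [LinearOrder K] [IsStrictOrderedRing K] {d m F : ℕ → K}

theorem m_succ_nonneg (h : IsMasterRecursion d m F) {k : ℕ} (hFk : 0 ≤ F k) : 0 ≤ m (k + 1) :=
  h.m_succ k ▸ div_nonneg hFk (h.d_pos _ k.succ_ne_zero).le

theorem F_nonneg (h : IsMasterRecursion d m F) (k : ℕ) : 0 ≤ F k := by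
  induction k using Nat.strong_induction_on with
  | _ k ih =>
    rcases k.eq_zero_or_pos with rfl | hk
    · exact h.F_zero ▸ zero_le_one
    · refine nonneg_of_mul_nonneg_right ?_ (Nat.cast_pos.2 hk : (0 : K) < k)
      rw [h.natCast_mul_F k hk]
      refine Finset.sum_nonneg fun j hj => ?_
      obtain ⟨hj_one, hjk⟩ := Finset.mem_Icc.1 hj
      obtain ⟨i, rfl⟩ := Nat.exists_eq_add_of_le' hj_one
      have hm_nonneg : 0 ≤ m (i + 1) := h.m_succ_nonneg (ih i (by lia))
      exact mul_nonneg (mul_nonneg (Nat.cast_nonneg _) hm_nonneg) (ih _ (by lia))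

theorem m_nonneg (h : IsMasterRecursion d m F) {k : ℕ} (hk : 1 ≤ k) : 0 ≤ m k := by
  obtain ⟨i, rfl⟩ := Nat.exists_eq_add_of_le' hk
  exact h.m_succ_nonneg (h.F_nonneg i)

theorem m_le_F (h : IsMasterRecursion d m F) {k : ℕ} (hk : 1 ≤ k) : m k ≤ F k := by
  have hterm_nonneg : ∀ j ∈ Finset.Icc 1 k, 0 ≤ j * m j * F (k - j) := fun j hj =>
    mul_nonneg (mul_nonneg j.cast_nonneg (h.m_nonneg (Finset.mem_Icc.1 hj).1)) (h.F_nonneg _)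
  refine le_of_mul_le_mul_left ?_ (Nat.cast_pos.2 hk : (0 : K) < k)
  calc
    k * m k = k * m k * F (k - k) := by rw [Nat.sub_self, h.F_zero, mul_one]
    _ ≤ ∑ j ∈ Finset.Icc 1 k, j * m j * F (k - j) :=
      Finset.single_le_sum hterm_nonneg (Finset.right_mem_Icc.2 hk)
    _ = k * F k := (h.natCast_mul_F k hk).symm

theorem one_div_prod_le_m (h : IsMasterRecursion d m F) {k : ℕ} (hk : 1 ≤ k) :
    1 / ∏ j ∈ Finset.Icc 1 k, d j ≤ m k := by
  induction k, hk using Nat.le_induction with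
  | base => simp [h.m_succ 0, h.F_zero]
  | succ k hk ih =>
    calc
      1 / ∏ j ∈ Finset.Icc 1 (k + 1), d j = (1 / ∏ j ∈ Finset.Icc 1 k, d j) / d (k + 1) := by
        rw [Finset.prod_Icc_succ_top (by lia), div_div]
      _ ≤ F k / d (k + 1) :=
        div_le_div_of_nonneg_right (ih.trans (h.m_le_F hk)) (h.d_pos _ k.succ_ne_zero).le
      _ = m (k + 1) := (h.m_succ k).symm

theorem one_div_prod_isBigO_m {d m F : ℕ → ℝ} (h : IsMasterRecursion d m F) :
    (fun k => 1 / ∏ j ∈ Finset.Icc 1 k, d j) =O[atTop] m := by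
  refine .of_norm_eventuallyLE ((eventually_ge_atTop 1).mono fun k hk => ?_)
  have hprod_pos : 0 < ∏ j ∈ Finset.Icc 1 k, d j :=
    Finset.prod_pos fun j hj => h.d_pos j (Nat.one_le_iff_ne_zero.1 (Finset.mem_Icc.1 hj).1)
  exact (Real.norm_of_nonneg (one_div_pos.2 hprod_pos).le).trans_le (h.one_div_prod_le_m hk)

end IsMasterRecursion

theorem stmt5_general {d m F : ℕ → ℝ} (h : IsMasterRecursion d m F) :
    (∀ k : ℕ, 1 ≤ k → 1 / (∏ j ∈ Finset.Icc 1 k, d j) ≤ m k) ∧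
    ∀ r : ℝ, (Summable fun k : ℕ => m k * r ^ k) →
      Summable fun k : ℕ => (1 / ∏ j ∈ Finset.Icc 1 k, d j) * r ^ k :=
  ⟨fun _ => h.one_div_prod_le_m, fun r hsum =>
    summable_of_isBigO_nat hsum (h.one_div_prod_isBigO_m.mul (isBigO_refl (fun k => r ^ k) atTop))⟩

/-- the nonlinear coefficients dominate the linear ones,
`m_k ≥ 1/(D(1)⋯D(k))` for `k ≥ 1`; consequently wherever the series `Σ m_k r^k`
converges, so does `Σ r^k/(D(1)⋯D(k))` — i.e. the radius of convergence of
`Σ m_k x^k` is at most that of `Σ x^k/(D(1)⋯D(k))`. -/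
theorem stmt5 (α : ℝ) (hα : Irrational α) (m F : ℕ → ℝ)
    (hm0 : m 0 = 0) (hF0 : F 0 = 1)
    (hm : ∀ k : ℕ, m (k + 1) = F k / D α (k + 1))
    (hF : ∀ k : ℕ, 1 ≤ k →
      (k : ℝ) * F k = ∑ j ∈ Finset.Icc 1 k, (j : ℝ) * m j * F (k - j)) :
    (∀ k : ℕ, 1 ≤ k → 1 / (∏ j ∈ Finset.Icc 1 k, D α j) ≤ m k) ∧
    ∀ r : ℝ, 0 ≤ r → (Summable fun k : ℕ => m k * r ^ k) →
      Summable fun k : ℕ => (1 / ∏ j ∈ Finset.Icc 1 k, D α j) * r ^ k := by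
  obtain ⟨hle, hsum⟩ := stmt5_general ⟨fun _ => D_pos hα, hF0, hm, hF⟩
  exact ⟨hle, fun r _ => hsum r⟩
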